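/- arXiv:1205.5754 — 2 statements merged into one kernel-verified Lean document; each statement's English description precedes it below -/
import Mathlib

section
/- Let η : Fin 4 → Fin 4 → ℝ be the Minkowski metric (η μ ν = 0 for μ ≠ ν, η 0 0 = 1, η k k = −1 for k = 1,2,3), let γ : Fin 4 → Matrix (Fin 4) (Fin 4) ℂ satisfy the Clifford relations γ μ * γ ν + γ ν * γ μ = (2 * η μ ν : ℂ) • 1 for all μ, ν, and define σ μ ν := (Complex.I/2) • (γ μ * γ ν − γ ν * γ μ) and the lowered Dirac matrices γ' μ := (η μ μ : ℂ) • γ μ. Let m ≠ 0 be a real number. Then for all row vectors ū, c_α : Fin 4 → ℂ (α ∈ Fin 4) and column vectors u, b_β : Fin 4 → ℂ (β ∈ Fin 4), the following algebraic identity holds, where ⟨r, M, v⟩ := ∑_{j,k} r j * M j k * v k and r ⬝ v := ∑_j r j * v j and γ^α with raised index is γ α: ∑_{α,β} ⟨ c_α + (Complex.I*m/6) • (ū ᵥ* γ' α), (1/(Complex.I*m)) • σ α β, b_β − (Complex.I*m/6) • ((γ' β).mulVec u) ⟩ − (4*m/3) * (ū ⬝ u) = (Complex.I/2) * ∑_α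 ( ⟨ū, γ α, b_α⟩ − ⟨c_α, γ α, u⟩ ) − (Complex.I/m) * ∑_{α,β} ⟨c_α, σ α β, b_β⟩ − m * (ū ⬝ u), where ū ᵥ* γ' α denotes the row-vector–matrix product. -/
open Matrix

/-- The scalar `u ⬝ M ⬝ v = ∑_{j,k} u j * M j k * v k`. -/
noncomputable def triple (u : Fin 4 → ℂ) (M : Matrix (Fin 4) (Fin 4) ℂ) (v : Fin 4 → ℂ) : ℂ :=
  ∑ j : Fin 4, ∑ k : Fin 4, u j * M j k * v k

/-- The scalar `u ⬝ v = ∑_j u j * v j`. -/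
noncomputable def dotc (u v : Fin 4 → ℂ) : ℂ := ∑ j : Fin 4, u j * v j

/-!
Write `γ_β = ∑ ν, η_{βν} γ^ν`, where `η_{βν}` is the inverse of `η^{βν}`. In dimension `n` the
Clifford relations give `γ^β γ_β = γ_β γ^β = n`, and hence
`σ^{αβ} γ_β = γ_β σ^{βα} = i (n - 1) γ^α` and `γ_α σ^{αβ} γ_β = i n (n - 1)`. Expanding the factored
form with shift `k = i m / (2 (n - 1))`, the two cross terms therefore reproduce the kinetic term,
and the term quadratic in `k` is `n m / (4 (n - 1)) ψ̄ ψ`. For `n = 4` the latter is `(m / 3) ψ̄ ψ`,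
which accounts for the coefficient `4 m / 3 = m + m / 3`.
-/

section IndexLowering

variable {ι R M : Type*} [Fintype ι] [DecidableEq ι] [CommRing R] [AddCommMonoid M] [Module R M]

/-- The family `γ_μ = ∑ ν, η_{μν} γ^ν` obtained from `γ^μ` by lowering its index. The argument `η`
is the metric with raised indices, so its inverse matrix appears; it is `0` for degenerate `η`. -/
noncomputable def lowerIndex (η : Matrix ι ι R) (γ : ι → M) (μ : ι) : M :=
  ∑ ν, η⁻¹ μ ν • γ ν

theorem sum_smul_lowerIndex {η : Matrix ι ι R} (hdet : IsUnit η.det) (γ : ι → M) (μ : ι) :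
    ∑ ν, η μ ν • lowerIndex η γ ν = γ μ := by
  simp only [lowerIndex, Finset.smul_sum, smul_smul]
  rw [Finset.sum_comm]
  simp only [← Finset.sum_smul, ← Matrix.mul_apply, Matrix.mul_nonsing_inv η hdet,
    Matrix.one_apply, ite_smul, one_smul, zero_smul, Finset.sum_ite_eq, Finset.mem_univ, if_true]

theorem mul_self_eq_one_of_isDiag {η : Matrix ι ι R} (hdiag : η.IsDiag)
    (hsq : ∀ μ, η μ μ * η μ μ = 1) : η * η = 1 := by
  rw [← hdiag.diagonal_diag, Matrix.diagonal_mul_diagonal, ← Matrix.diagonal_one]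
  exact congrArg Matrix.diagonal (funext hsq)

theorem lowerIndex_of_isDiag {η : Matrix ι ι R} (hdiag : η.IsDiag) (hsq : ∀ μ, η μ μ * η μ μ = 1)
    (γ : ι → M) (μ : ι) : lowerIndex η γ μ = η μ μ • γ μ := by
  rw [lowerIndex, Matrix.inv_eq_left_inv (mul_self_eq_one_of_isDiag hdiag hsq),
    Finset.sum_eq_single μ]
  · intro ν _ hν
    rw [hdiag hν.symm, zero_smul]
  · simp

end IndexLowering

section Contractions

variable {ι R A : Type*} [CommRing R] [Ring A] [Algebra R A]

/-- The Clifford relations `γ^μ γ^ν + γ^ν γ^μ = 2 η^{μν}` for a family of elements of an associative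
algebra, `η` being the metric with raised indices. -/
def CliffordRelations (η : Matrix ι ι R) (γ : ι → A) : Prop :=
  ∀ μ ν, γ μ * γ ν + γ ν * γ μ = (2 * η μ ν) • 1

variable {η : Matrix ι ι R} {γ : ι → A}

theorem CliffordRelations.lie_eq (hγ : CliffordRelations η γ) (μ ν : ι) :
    ⁅γ μ, γ ν⁆ = (2 : R) • (γ μ * γ ν) - (2 : R) • η μ ν • (1 : A) := by
  rw [Ring.lie_def, smul_smul, ← hγ μ ν, two_smul]
  abel

variable [Fintype ι] [DecidableEq ι]

theorem sum_lowerIndex_mul_eq_sum_mul_lowerIndex (hη : η.IsSymm) (γ : ι → A) :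
    ∑ μ, lowerIndex η γ μ * γ μ = ∑ μ, γ μ * lowerIndex η γ μ := by
  simp only [lowerIndex, Finset.sum_mul, Finset.mul_sum, smul_mul_assoc, mul_smul_comm]
  rw [Finset.sum_comm]
  simp only [hη.inv.apply]

namespace CliffordRelations

theorem two_smul_sum_mul_lowerIndex (hγ : CliffordRelations η γ) (hη : η.IsSymm)
    (hdet : IsUnit η.det) :
    (2 : R) • ∑ μ, γ μ * lowerIndex η γ μ = (2 * Fintype.card ι : R) • (1 : A) := by
  calc (2 : R) • ∑ μ, γ μ * lowerIndex η γ μ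
      = ∑ μ, γ μ * lowerIndex η γ μ + ∑ μ, lowerIndex η γ μ * γ μ := by
        rw [sum_lowerIndex_mul_eq_sum_mul_lowerIndex hη, two_smul]
    _ = ∑ μ, ∑ ν, η⁻¹ μ ν • (γ μ * γ ν + γ ν * γ μ) := by
        simp only [lowerIndex, Finset.sum_mul, Finset.mul_sum, smul_mul_assoc, mul_smul_comm,
          smul_add, Finset.sum_add_distrib]
    _ = (2 * ∑ μ, ∑ ν, η⁻¹ μ ν * η ν μ) • (1 : A) := by
        simp only [hγ _ _, smul_smul, ← Finset.sum_smul, Finset.mul_sum, hη.apply, mul_left_comm]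
    _ = (2 * Fintype.card ι : R) • (1 : A) := by
        simp only [← Matrix.mul_apply, Matrix.nonsing_inv_mul η hdet, Matrix.one_apply_eq,
          Finset.sum_const, Finset.card_univ, nsmul_eq_mul, mul_one]

theorem sum_lie_mul_lowerIndex (hγ : CliffordRelations η γ) (hη : η.IsSymm)
    (hdet : IsUnit η.det) (μ : ι) :
    ∑ ν, ⁅γ μ, γ ν⁆ * lowerIndex η γ ν = (2 * (Fintype.card ι - 1) : R) • γ μ := by
  calc ∑ ν, ⁅γ μ, γ ν⁆ * lowerIndex η γ ν
      = γ μ * (2 : R) • ∑ ν, γ ν * lowerIndex η γ ν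
          - (2 : R) • ∑ ν, η μ ν • lowerIndex η γ ν := by
        simp only [hγ.lie_eq, sub_mul, smul_mul_assoc, one_mul, mul_assoc, mul_smul_comm,
          Finset.sum_sub_distrib, Finset.smul_sum, Finset.mul_sum]
    _ = (2 * (Fintype.card ι - 1) : R) • γ μ := by
        rw [hγ.two_smul_sum_mul_lowerIndex hη hdet, sum_smul_lowerIndex hdet, mul_smul_comm,
          mul_one]
        module

theorem sum_lowerIndex_mul_lie (hγ : CliffordRelations η γ) (hη : η.IsSymm)
    (hdet : IsUnit η.det) (ν : ι) :
    ∑ μ, lowerIndex η γ μ * ⁅γ μ, γ ν⁆ = (2 * (Fintype.card ι - 1) : R) • γ ν := by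
  calc ∑ μ, lowerIndex η γ μ * ⁅γ μ, γ ν⁆
      = ((2 : R) • ∑ μ, lowerIndex η γ μ * γ μ) * γ ν
          - (2 : R) • ∑ μ, η ν μ • lowerIndex η γ μ := by
        simp only [hγ.lie_eq, mul_sub, smul_mul_assoc, mul_one, mul_assoc, mul_smul_comm,
          Finset.sum_sub_distrib, Finset.smul_sum, Finset.sum_mul, hη.apply]
    _ = (2 * (Fintype.card ι - 1) : R) • γ ν := by
        rw [sum_lowerIndex_mul_eq_sum_mul_lowerIndex hη, hγ.two_smul_sum_mul_lowerIndex hη hdet,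
          sum_smul_lowerIndex hdet, smul_mul_assoc, one_mul]
        module

theorem sum_lowerIndex_mul_lie_mul_lowerIndex (hγ : CliffordRelations η γ) (hη : η.IsSymm)
    (hdet : IsUnit η.det) :
    ∑ μ, ∑ ν, lowerIndex η γ μ * ⁅γ μ, γ ν⁆ * lowerIndex η γ ν
      = (2 * Fintype.card ι * (Fintype.card ι - 1) : R) • (1 : A) := by
  calc ∑ μ, ∑ ν, lowerIndex η γ μ * ⁅γ μ, γ ν⁆ * lowerIndex η γ ν
      = (Fintype.card ι - 1 : R) • (2 : R) • ∑ μ, lowerIndex η γ μ * γ μ := by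
        simp only [mul_assoc, ← Finset.mul_sum, hγ.sum_lie_mul_lowerIndex hη hdet, mul_smul_comm,
          ← Finset.smul_sum, smul_smul, mul_comm]
    _ = (2 * Fintype.card ι * (Fintype.card ι - 1) : R) • (1 : A) := by
        rw [sum_lowerIndex_mul_eq_sum_mul_lowerIndex hη, hγ.two_smul_sum_mul_lowerIndex hη hdet,
          smul_smul, mul_comm]

end CliffordRelations

end Contractions

/-- The spin tensor `σ^{μν}`, normalized by `[γ^μ, γ^ν] = -2 i σ^{μν}`. -/
noncomputable def spinTensor {ι A : Type*} [Ring A] [Algebra ℂ A] (γ : ι → A) (μ ν : ι) : A :=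
  (Complex.I / 2) • ⁅γ μ, γ ν⁆

namespace CliffordRelations

variable {ι A : Type*} [Fintype ι] [DecidableEq ι] [Ring A] [Algebra ℂ A]
  {η : Matrix ι ι ℂ} {γ : ι → A}

theorem sum_spinTensor_mul_lowerIndex (hγ : CliffordRelations η γ) (hη : η.IsSymm)
    (hdet : IsUnit η.det) (μ : ι) :
    ∑ ν, spinTensor γ μ ν * lowerIndex η γ ν = (Complex.I * (Fintype.card ι - 1)) • γ μ := by
  simp only [spinTensor, smul_mul_assoc, ← Finset.smul_sum, hγ.sum_lie_mul_lowerIndex hη hdet]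
  module

theorem sum_lowerIndex_mul_spinTensor (hγ : CliffordRelations η γ) (hη : η.IsSymm)
    (hdet : IsUnit η.det) (ν : ι) :
    ∑ μ, lowerIndex η γ μ * spinTensor γ μ ν = (Complex.I * (Fintype.card ι - 1)) • γ ν := by
  simp only [spinTensor, mul_smul_comm, ← Finset.smul_sum, hγ.sum_lowerIndex_mul_lie hη hdet]
  module

theorem sum_lowerIndex_mul_spinTensor_mul_lowerIndex (hγ : CliffordRelations η γ)
    (hη : η.IsSymm) (hdet : IsUnit η.det) :
    ∑ μ, ∑ ν, lowerIndex η γ μ * spinTensor γ μ ν * lowerIndex η γ ν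
      = (Complex.I * Fintype.card ι * (Fintype.card ι - 1)) • (1 : A) := by
  simp only [spinTensor, mul_smul_comm, smul_mul_assoc, ← Finset.smul_sum,
    hγ.sum_lowerIndex_mul_lie_mul_lowerIndex hη hdet]
  module

end CliffordRelations

section BilinearExpansion

variable {ι ι' κ₁ κ₂ κ₃ κ₄ R : Type*} [Fintype ι] [Fintype ι'] [Fintype κ₁] [Fintype κ₂]
  [Fintype κ₃] [Fintype κ₄] [CommRing R]

theorem add_dotProduct_smul_mulVec_sub (s : κ₁ → R) (r : κ₂ → R) (v : κ₃ → R) (w : κ₄ → R)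
    (k l : R) (P : Matrix κ₁ κ₂ R) (M : Matrix κ₂ κ₃ R) (Q : Matrix κ₃ κ₄ R) :
    (r + k • (s ᵥ* P)) ⬝ᵥ ((l • M) *ᵥ (v - k • (Q *ᵥ w)))
      = l * (r ⬝ᵥ (M *ᵥ v)) - l * k * (r ⬝ᵥ ((M * Q) *ᵥ w))
        + l * k * (s ⬝ᵥ ((P * M) *ᵥ v)) - l * k ^ 2 * (s ⬝ᵥ ((P * M * Q) *ᵥ w)) := by
  simp only [smul_mulVec, dotProduct_smul, smul_eq_mul, mulVec_sub, mulVec_smul, add_dotProduct,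
    smul_dotProduct, dotProduct_sub, ← mulVec_mulVec, ← dotProduct_mulVec]
  ring

theorem sum_add_dotProduct_smul_mulVec_sub (s : κ₁ → R) (r : ι → κ₂ → R) (v : ι' → κ₃ → R)
    (w : κ₄ → R) (k l : R) (P : ι → Matrix κ₁ κ₂ R) (M : ι → ι' → Matrix κ₂ κ₃ R)
    (Q : ι' → Matrix κ₃ κ₄ R) :
    ∑ α, ∑ β, (r α + k • (s ᵥ* P α)) ⬝ᵥ ((l • M α β) *ᵥ (v β - k • (Q β *ᵥ w)))
      = l * ∑ α, ∑ β, r α ⬝ᵥ (M α β *ᵥ v β)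
        - l * k * ∑ α, r α ⬝ᵥ ((∑ β, M α β * Q β) *ᵥ w)
        + l * k * ∑ β, s ⬝ᵥ ((∑ α, P α * M α β) *ᵥ v β)
        - l * k ^ 2 * (s ⬝ᵥ ((∑ α, ∑ β, P α * M α β * Q β) *ᵥ w)) := by
  simp only [add_dotProduct_smul_mulVec_sub, Finset.sum_sub_distrib, Finset.sum_add_distrib,
    ← Finset.mul_sum, sum_mulVec, dotProduct_sum]
  rw [Finset.sum_comm (f := fun α β => s ⬝ᵥ ((P α * M α β) *ᵥ v β))]

end BilinearExpansion

theorem regularized_dirac_lagrangian_factored_form_general {ι κ : Type*} [Fintype ι]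
    [DecidableEq ι] [Fintype κ] [DecidableEq κ] (hι : Fintype.card ι ≠ 1)
    {η : Matrix ι ι ℂ} (hη : η.IsSymm) (hdet : IsUnit η.det)
    {γ : ι → Matrix κ κ ℂ} (hγ : CliffordRelations η γ) {m : ℂ} (hm : m ≠ 0)
    (ub u : κ → ℂ) (c b : ι → κ → ℂ) :
    ∑ α, ∑ β,
        (c α + (Complex.I * m / (2 * (Fintype.card ι - 1))) • (ub ᵥ* lowerIndex η γ α)) ⬝ᵥ
          (((1 / (Complex.I * m)) • spinTensor γ α β) *ᵥ
            (b β - (Complex.I * m / (2 * (Fintype.card ι - 1))) • (lowerIndex η γ β *ᵥ u)))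
      - (m + Fintype.card ι * m / (4 * (Fintype.card ι - 1))) * (ub ⬝ᵥ u)
    = Complex.I / 2 * ∑ α, (ub ⬝ᵥ (γ α *ᵥ b α) - c α ⬝ᵥ (γ α *ᵥ u))
      - Complex.I / m * ∑ α, ∑ β, c α ⬝ᵥ (spinTensor γ α β *ᵥ b β)
      - m * (ub ⬝ᵥ u) := by
  have hn : (Fintype.card ι - 1 : ℂ) ≠ 0 := sub_ne_zero.mpr (by exact_mod_cast hι)
  have hI := Complex.I_ne_zero
  set n := (Fintype.card ι : ℂ)
  set k := Complex.I * m / (2 * (n - 1)) with hk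
  have derivative_coeff : 1 / (Complex.I * m) = -(Complex.I / m) := by
    rw [one_div, mul_inv, Complex.inv_I, neg_mul, div_eq_mul_inv]
  have kinetic_coeff : 1 / (Complex.I * m) * k * (Complex.I * (n - 1)) = Complex.I / 2 := by
    rw [hk]
    field_simp
  have mass_coeff :
      1 / (Complex.I * m) * k ^ 2 * (Complex.I * n * (n - 1)) = -(n * m / (4 * (n - 1))) := by
    rw [hk]
    field_simp
    linear_combination 4 * n * Complex.I_sq
  rw [sum_add_dotProduct_smul_mulVec_sub]
  simp only [hγ.sum_spinTensor_mul_lowerIndex hη hdet, hγ.sum_lowerIndex_mul_spinTensor hη hdet,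
    hγ.sum_lowerIndex_mul_spinTensor_mul_lowerIndex hη hdet, smul_mulVec, one_mulVec,
    dotProduct_smul, smul_eq_mul, ← Finset.mul_sum, Finset.sum_sub_distrib]
  linear_combination (∑ α, ∑ β, c α ⬝ᵥ (spinTensor γ α β *ᵥ b β)) * derivative_coeff
    + (∑ α, ub ⬝ᵥ (γ α *ᵥ b α) - ∑ α, c α ⬝ᵥ (γ α *ᵥ u)) * kinetic_coeff
    - (ub ⬝ᵥ u) * mass_coeff

theorem triple_eq_dotProduct_mulVec (r : Fin 4 → ℂ) (M : Matrix (Fin 4) (Fin 4) ℂ)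
    (v : Fin 4 → ℂ) : triple r M v = r ⬝ᵥ (M *ᵥ v) := by
  simp only [triple, dotProduct, mulVec, Finset.mul_sum, mul_assoc]

theorem dotc_eq_dotProduct (r v : Fin 4 → ℂ) : dotc r v = r ⬝ᵥ v := rfl

/-- Pointwise algebraic identity showing that the regularized Dirac Lagrangian
`L_D′ = (i/2)(ψ̄ γ^α ∂_α ψ − ∂_α ψ̄ γ^α ψ) − (i/m) ∂_α ψ̄ σ^{αβ} ∂_β ψ − m ψ̄ ψ`
can be written in the factored form
`(∂_α ψ̄ + (im/6) ψ̄ γ_α)(σ^{αβ}/(im))(∂_β ψ − (im/6) γ_β ψ) − (4m/3) ψ̄ ψ`. -/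
theorem regularized_dirac_lagrangian_factored_form
    (η : Fin 4 → Fin 4 → ℝ)
    (hη_off : ∀ μ ν, μ ≠ ν → η μ ν = 0)
    (hη_00 : η 0 0 = 1)
    (hη_kk : ∀ k : Fin 4, k ≠ 0 → η k k = -1)
    (γ : Fin 4 → Matrix (Fin 4) (Fin 4) ℂ)
    (hγ : ∀ μ ν, γ μ * γ ν + γ ν * γ μ = (2 * (η μ ν : ℂ)) • 1)
    (σ : Fin 4 → Fin 4 → Matrix (Fin 4) (Fin 4) ℂ)
    (hσ : ∀ μ ν, σ μ ν = (Complex.I / 2) • (γ μ * γ ν - γ ν * γ μ))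
    (γ' : Fin 4 → Matrix (Fin 4) (Fin 4) ℂ)
    (hγ' : ∀ μ, γ' μ = ((η μ μ : ℂ)) • γ μ)
    (m : ℝ) (hm : m ≠ 0)
    (ub u : Fin 4 → ℂ) (c b : Fin 4 → (Fin 4 → ℂ)) :
    (∑ α : Fin 4, ∑ β : Fin 4,
        triple (c α + (Complex.I * (m : ℂ) / 6) • (ub ᵥ* γ' α))
               ((1 / (Complex.I * (m : ℂ))) • σ α β)
               (b β - (Complex.I * (m : ℂ) / 6) • ((γ' β).mulVec u)))
      - (4 * (m : ℂ) / 3) * dotc ub u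
    = (Complex.I / 2) * (∑ α : Fin 4, (triple ub (γ α) (b α) - triple (c α) (γ α) u))
      - (Complex.I / (m : ℂ)) *
          (∑ α : Fin 4, ∑ β : Fin 4, triple (c α) (σ α β) (b β))
      - (m : ℂ) * dotc ub u := by
  let ηC : Matrix (Fin 4) (Fin 4) ℂ := fun μ ν => η μ ν
  have hdiag : ηC.IsDiag := fun μ ν hμν => by simp [ηC, hη_off μ ν hμν]
  have hsq (μ : Fin 4) : ηC μ μ * ηC μ μ = 1 := by
    obtain rfl | hμ := eq_or_ne μ 0
    · simp [ηC, hη_00]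
    · simp [ηC, hη_kk μ hμ]
  have hdet : IsUnit ηC.det :=
    Matrix.isUnit_det_of_left_inverse (mul_self_eq_one_of_isDiag hdiag hsq)
  obtain rfl : γ' = lowerIndex ηC γ :=
    funext fun μ => (hγ' μ).trans (lowerIndex_of_isDiag hdiag hsq γ μ).symm
  obtain rfl : σ = spinTensor γ := funext₂ hσ
  simp only [triple_eq_dotProduct_mulVec, dotc_eq_dotProduct]
  convert regularized_dirac_lagrangian_factored_form_general (by simp) hdiag.isSymm hdet hγ
    (Complex.ofReal_ne_zero.mpr hm) ub u c b using 3
  · norm_num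
  · norm_num
    ring
end

section
/- Let σ : Fin 4 → Fin 4 → Matrix (Fin 4) (Fin 4) ℂ be a constant skew-symmetric family (σ α β = −(σ β α)), let m ≠ 0 be a real number, and let ψ, ψ̄ : ℝ⁴ → (Fin 4 → ℂ) be twice continuously differentiable. For μ, ν ∈ Fin 4 define j_μ^ν(x) := −(Complex.I/m) * ( ∑_α ∂_α ψ̄(x) ⬝ (σ α ν) ⬝ ∂_μ ψ(x) + ∑_α ∂_μ ψ̄(x) ⬝ (σ ν α) ⬝ ∂_α ψ(x) − (if μ = ν then 1 else 0) * ∑_{α,λ} ∂_α ψ̄(x) ⬝ (σ α λ) ⬝ ∂_λ ψ(x) ), where u ⬝ M ⬝ v := ∑_{j,k} u j * M j k * v k. Then for every μ ∈ Fin 4 and every x ∈ ℝ⁴, ∑_{ν ∈ Fin 4} ∂_ν (y ↦ j_μ^ν(y)) (x) = 0. -/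
/-- Partial derivative of a function on ℝ⁴ in the μ-th coordinate direction. -/
noncomputable def pd {E : Type*} [NormedAddCommGroup E] [NormedSpace ℝ E]
    (μ : Fin 4) (f : (Fin 4 → ℝ) → E) : (Fin 4 → ℝ) → E :=
  fun x => fderiv ℝ f x (Pi.single μ 1)

/-!
The quantity `j_μ^ν` is the canonical energy-momentum tensor
`∂L/∂(∂_ν ψ) ∂_μ ψ + ∂L/∂(∂_ν ψ̄) ∂_μ ψ̄ - δ_μ^ν L` of the Lagrangian
`L = ∑ α β, B α β (∂_α ψ̄) (∂_β ψ)`, where `B α β` is the bilinear form of `-(i / m) σ α β`.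
Since `B` is skew while second derivatives are symmetric, both momenta `∂L/∂(∂_ν ψ)` and
`∂L/∂(∂_ν ψ̄)` are divergence-free, whatever `ψ` and `ψ̄` are. The divergence of the first two terms
therefore consists of the momenta paired with `∂_ν ∂_μ ψ` and `∂_ν ∂_μ ψ̄`, and by the chain rule
this is `∂_μ L`.
-/

theorem sum_sum_eq_zero_of_skew {ι M : Type*} [Fintype ι] [AddCommGroup M] [IsAddTorsionFree M]
    {a : ι → ι → M} (ha : ∀ i k, a i k = -a k i) : ∑ i, ∑ k, a i k = 0 := by
  refine self_eq_neg.1 ?_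
  calc ∑ i, ∑ k, a i k = ∑ k, ∑ i, a i k := Finset.sum_comm
    _ = ∑ k, ∑ i, -a k i := by simp only [← ha]
    _ = -∑ k, ∑ i, a k i := by simp only [Finset.sum_neg_distrib]

section BilinearLagrangian

variable {𝕜 V E F G ι : Type*} [NontriviallyNormedField 𝕜]
  [NormedAddCommGroup V] [NormedSpace 𝕜 V] [NormedAddCommGroup E] [NormedSpace 𝕜 E]
  [NormedAddCommGroup F] [NormedSpace 𝕜 F] [NormedAddCommGroup G] [NormedSpace 𝕜 G]
  [Fintype ι] {f : V → E} {g : V → F} {x : V}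

/-- The Lagrangian density `∑ α β, B α β (∂_α f) (∂_β g)` of a pair of fields `f`, `g`, where `∂_α`
is the derivative in the constant direction `e α`. -/
noncomputable def bilinLagrangian (B : ι → ι → E →L[𝕜] F →L[𝕜] G) (e : ι → V)
    (f : V → E) (g : V → F) (x : V) : G :=
  ∑ α, ∑ β, B α β (fderiv 𝕜 f x (e α)) (fderiv 𝕜 g x (e β))

/-- The canonical energy-momentum tensor
`T_μ^ν = ∂L/∂(∂_ν g) ∂_μ g + ∂L/∂(∂_ν f) ∂_μ f - δ_μ^ν L` of `L = bilinLagrangian B e f g`. -/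
noncomputable def canonicalTensor [DecidableEq ι] (B : ι → ι → E →L[𝕜] F →L[𝕜] G) (e : ι → V)
    (f : V → E) (g : V → F) (μ ν : ι) (x : V) : G :=
  ∑ α, B α ν (fderiv 𝕜 f x (e α)) (fderiv 𝕜 g x (e μ))
    + ∑ α, B ν α (fderiv 𝕜 f x (e μ)) (fderiv 𝕜 g x (e α))
    - if μ = ν then bilinLagrangian B e f g x else 0

theorem differentiableAt_fderiv_of_two_le {n : WithTop ℕ∞} (hn : 2 ≤ n)
    (hf : ContDiffAt 𝕜 n f x) : DifferentiableAt 𝕜 (fderiv 𝕜 f) x :=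
  (hf.fderiv_right (m := 1) (by simpa [one_add_one_eq_two] using hn)).differentiableAt one_ne_zero

theorem fderiv_bilin_fderiv (b : E →L[𝕜] F →L[𝕜] G)
    (hf : DifferentiableAt 𝕜 (fderiv 𝕜 f) x) (hg : DifferentiableAt 𝕜 (fderiv 𝕜 g) x)
    (u v w : V) :
    fderiv 𝕜 (fun y => b (fderiv 𝕜 f y v) (fderiv 𝕜 g y w)) x u
      = b (fderiv 𝕜 (fderiv 𝕜 f) x u v) (fderiv 𝕜 g x w)
        + b (fderiv 𝕜 f x v) (fderiv 𝕜 (fderiv 𝕜 g) x u w) := by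
  rw [b.fderiv_of_bilinear (by fun_prop) (by fun_prop),
    fderiv_clm_apply hf (differentiableAt_const v), fderiv_clm_apply hg (differentiableAt_const w)]
  simp [add_comm]

theorem fderiv_bilinLagrangian (B : ι → ι → E →L[𝕜] F →L[𝕜] G) (e : ι → V)
    (hf : DifferentiableAt 𝕜 (fderiv 𝕜 f) x) (hg : DifferentiableAt 𝕜 (fderiv 𝕜 g) x) (u : V) :
    fderiv 𝕜 (bilinLagrangian B e f g) x u
      = ∑ α, ∑ β, B α β (fderiv 𝕜 (fderiv 𝕜 f) x u (e α)) (fderiv 𝕜 g x (e β))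
        + ∑ α, ∑ β, B α β (fderiv 𝕜 f x (e α)) (fderiv 𝕜 (fderiv 𝕜 g) x u (e β)) := by
  have hdiff (α β : ι) :
      DifferentiableAt 𝕜 (fun y => B α β (fderiv 𝕜 f y (e α)) (fderiv 𝕜 g y (e β))) x := by
    fun_prop
  unfold bilinLagrangian
  rw [fderiv_fun_sum fun α _ => by fun_prop]
  simp only [fderiv_fun_sum fun β _ => hdiff _ β, sum_apply, fderiv_bilin_fderiv _ hf hg,
    Finset.sum_add_distrib]

theorem fderiv_canonicalTensor [DecidableEq ι] (B : ι → ι → E →L[𝕜] F →L[𝕜] G) (e : ι → V)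
    (hf : DifferentiableAt 𝕜 (fderiv 𝕜 f) x) (hg : DifferentiableAt 𝕜 (fderiv 𝕜 g) x)
    (μ ν : ι) (u : V) :
    fderiv 𝕜 (canonicalTensor B e f g μ ν) x u
      = fderiv 𝕜 (fun y => ∑ α, B α ν (fderiv 𝕜 f y (e α)) (fderiv 𝕜 g y (e μ))) x u
        + fderiv 𝕜 (fun y => ∑ α, B ν α (fderiv 𝕜 f y (e μ)) (fderiv 𝕜 g y (e α))) x u
        - if μ = ν then fderiv 𝕜 (bilinLagrangian B e f g) x u else 0 := by
  have hL : DifferentiableAt 𝕜 (bilinLagrangian B e f g) x := by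
    unfold bilinLagrangian
    fun_prop
  unfold canonicalTensor
  split_ifs
  · rw [fderiv_fun_sub (by fun_prop) hL, fderiv_fun_add (by fun_prop) (by fun_prop)]
    rfl
  · simp only [sub_zero]
    rw [fderiv_fun_add (by fun_prop) (by fun_prop)]
    rfl

theorem sum_fderiv_momentum_left [IsAddTorsionFree G] {B : ι → ι → E →L[𝕜] F →L[𝕜] G}
    (hB : ∀ α β, B α β = -B β α) (e : ι → V)
    (hf : DifferentiableAt 𝕜 (fderiv 𝕜 f) x) (hf_symm : IsSymmSndFDerivAt 𝕜 f x)
    (hg : DifferentiableAt 𝕜 (fderiv 𝕜 g) x) (w : V) :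
    ∑ ν, fderiv 𝕜 (fun y => ∑ α, B α ν (fderiv 𝕜 f y (e α)) (fderiv 𝕜 g y w)) x (e ν)
      = ∑ α, ∑ ν, B α ν (fderiv 𝕜 f x (e α)) (fderiv 𝕜 (fderiv 𝕜 g) x (e ν) w) := by
  have momentum_divergence_free :
      ∑ α, ∑ ν, B α ν (fderiv 𝕜 (fderiv 𝕜 f) x (e ν) (e α)) (fderiv 𝕜 g x w) = 0 :=
    sum_sum_eq_zero_of_skew fun α ν => by rw [hB, hf_symm.eq (e ν) (e α)]; rfl
  have hdiff (α ν : ι) :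
      DifferentiableAt 𝕜 (fun y => B α ν (fderiv 𝕜 f y (e α)) (fderiv 𝕜 g y w)) x := by
    fun_prop
  simp only [fderiv_fun_sum fun α _ => hdiff α _, sum_apply, fderiv_bilin_fderiv _ hf hg]
  rw [Finset.sum_comm]
  simp only [Finset.sum_add_distrib, momentum_divergence_free, zero_add]

theorem sum_fderiv_momentum_right [IsAddTorsionFree G] {B : ι → ι → E →L[𝕜] F →L[𝕜] G}
    (hB : ∀ α β, B α β = -B β α) (e : ι → V)
    (hf : DifferentiableAt 𝕜 (fderiv 𝕜 f) x)
    (hg : DifferentiableAt 𝕜 (fderiv 𝕜 g) x) (hg_symm : IsSymmSndFDerivAt 𝕜 g x) (w : V) :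
    ∑ ν, fderiv 𝕜 (fun y => ∑ α, B ν α (fderiv 𝕜 f y w) (fderiv 𝕜 g y (e α))) x (e ν)
      = ∑ ν, ∑ α, B ν α (fderiv 𝕜 (fderiv 𝕜 f) x (e ν) w) (fderiv 𝕜 g x (e α)) := by
  have flip_skew (α β : ι) : (B β α).flip = -(B α β).flip := by rw [hB β α]; rfl
  rw [Finset.sum_comm]
  exact sum_fderiv_momentum_left (B := fun α ν => (B ν α).flip) flip_skew e hg hg_symm hf w

theorem dirac_energy_momentum_difference_divergence_free_general
    [DecidableEq ι] [IsAddTorsionFree G] {B : ι → ι → E →L[𝕜] F →L[𝕜] G}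
    (hB : ∀ α β, B α β = -B β α) (e : ι → V) {n : WithTop ℕ∞} (hn : minSmoothness 𝕜 2 ≤ n)
    (hf : ContDiffAt 𝕜 n f x) (hg : ContDiffAt 𝕜 n g x) (μ : ι) :
    ∑ ν, fderiv 𝕜 (canonicalTensor B e f g μ ν) x (e ν) = 0 := by
  have hf_diff := differentiableAt_fderiv_of_two_le (le_minSmoothness.trans hn) hf
  have hg_diff := differentiableAt_fderiv_of_two_le (le_minSmoothness.trans hn) hg
  have hf_symm := hf.isSymmSndFDerivAt hn
  have hg_symm := hg.isSymmSndFDerivAt hn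
  have left_momentum := sum_fderiv_momentum_left hB e hf_diff hf_symm hg_diff (e μ)
  have right_momentum := sum_fderiv_momentum_right hB e hf_diff hg_diff hg_symm (e μ)
  have lagrangian := fderiv_bilinLagrangian B e hf_diff hg_diff (e μ)
  simp only [hf_symm.eq (e μ), hg_symm.eq (e μ)] at lagrangian
  calc ∑ ν, fderiv 𝕜 (canonicalTensor B e f g μ ν) x (e ν)
    _ = ∑ ν, fderiv 𝕜 (fun y => ∑ α, B α ν (fderiv 𝕜 f y (e α)) (fderiv 𝕜 g y (e μ))) x (e ν)
        + ∑ ν, fderiv 𝕜 (fun y => ∑ α, B ν α (fderiv 𝕜 f y (e μ)) (fderiv 𝕜 g y (e α))) x (e ν)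
        - fderiv 𝕜 (bilinLagrangian B e f g) x (e μ) := by
      simp only [fderiv_canonicalTensor B e hf_diff hg_diff, Finset.sum_sub_distrib,
        Finset.sum_add_distrib, Finset.sum_ite_eq, Finset.mem_univ, if_true]
    _ = 0 := by
      rw [left_momentum, right_momentum, lagrangian]
      abel

end BilinearLagrangian

/-- The form `triple · M ·` as a continuous bilinear map, over `ℝ` because the fields depend on real
coordinates. -/
noncomputable def tripleL (M : Matrix (Fin 4) (Fin 4) ℂ) :
    (Fin 4 → ℂ) →L[ℝ] (Fin 4 → ℂ) →L[ℝ] ℂ :=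
  (Matrix.toLinearMap₂' ℂ M).toContinuousBilinearMap.bilinearRestrictScalars ℝ

theorem tripleL_apply (M : Matrix (Fin 4) (Fin 4) ℂ) (u v : Fin 4 → ℂ) :
    tripleL M u v = triple u M v := by
  simp only [tripleL, triple, ContinuousLinearMap.bilinearRestrictScalars_apply_apply,
    LinearMap.toContinuousBilinearMap_apply, Matrix.toLinearMap₂'_apply, smul_eq_mul]
  simp only [mul_comm, mul_left_comm]

theorem tripleL_neg (M : Matrix (Fin 4) (Fin 4) ℂ) : tripleL (-M) = -tripleL M := by
  ext u v
  simp [tripleL_apply, triple]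

theorem triple_smul (c : ℂ) (u : Fin 4 → ℂ) (M : Matrix (Fin 4) (Fin 4) ℂ) (v : Fin 4 → ℂ) :
    triple u (c • M) v = c * triple u M v := by
  simp only [triple, Matrix.smul_apply, smul_eq_mul, Finset.mul_sum]
  simp only [mul_assoc, mul_left_comm]

theorem canonicalTensor_tripleL_smul (c : ℂ) (σ : Fin 4 → Fin 4 → Matrix (Fin 4) (Fin 4) ℂ)
    (ψb ψ : (Fin 4 → ℝ) → (Fin 4 → ℂ)) (μ ν : Fin 4) (x : Fin 4 → ℝ) :
    canonicalTensor (fun α β => tripleL (c • σ α β)) (fun α => Pi.single α (1 : ℝ)) ψb ψ μ ν x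
      = c * ((∑ α : Fin 4, triple (pd α ψb x) (σ α ν) (pd μ ψ x))
        + (∑ α : Fin 4, triple (pd μ ψb x) (σ ν α) (pd α ψ x))
        - (if μ = ν then (1 : ℂ) else 0) *
            ∑ α : Fin 4, ∑ l : Fin 4, triple (pd α ψb x) (σ α l) (pd l ψ x)) := by
  simp only [canonicalTensor, bilinLagrangian, tripleL_apply, triple_smul, pd, ← Finset.mul_sum]
  split_ifs <;> ring

/-- The difference `j_μ^ν` between the energy-momentum tensors of the
regularized and the symmetrized Dirac Lagrangians is divergence-free. -/
theorem dirac_energy_momentum_difference_divergence_free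
    (σ : Fin 4 → Fin 4 → Matrix (Fin 4) (Fin 4) ℂ)
    (hσ : ∀ α β, σ α β = -(σ β α))
    (m : ℝ) (hm : m ≠ 0)
    (ψ ψb : (Fin 4 → ℝ) → (Fin 4 → ℂ))
    (hψ : ContDiff ℝ 2 ψ) (hψb : ContDiff ℝ 2 ψb)
    (j : Fin 4 → Fin 4 → (Fin 4 → ℝ) → ℂ)
    (hj : ∀ μ ν x, j μ ν x = -(Complex.I / (m : ℂ)) *
      ((∑ α : Fin 4, triple (pd α ψb x) (σ α ν) (pd μ ψ x))
        + (∑ α : Fin 4, triple (pd μ ψb x) (σ ν α) (pd α ψ x))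
        - (if μ = ν then (1 : ℂ) else 0) *
            ∑ α : Fin 4, ∑ l : Fin 4, triple (pd α ψb x) (σ α l) (pd l ψ x)))
    (μ : Fin 4) (x : Fin 4 → ℝ) :
    ∑ ν : Fin 4, pd ν (j μ ν) x = 0 := by
  have hB (α β : Fin 4) :
      tripleL (-(Complex.I / m) • σ α β) = -tripleL (-(Complex.I / m) • σ β α) := by
    rw [hσ, smul_neg, tripleL_neg]
  have hT (ν : Fin 4) := funext fun y =>
    (hj μ ν y).trans (canonicalTensor_tripleL_smul _ σ ψb ψ μ ν y).symm
  simp only [hT]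
  exact dirac_energy_momentum_difference_divergence_free_general hB _ (by simp)
    hψb.contDiffAt hψ.contDiffAt μ
end
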